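/- Let r be a positive integer and let d₁ and d₂ be equivalence relations (set-partitions) on the disjoint union Fin r ⊕ Fin r. Form the disjoint union X = T ⊕ M ⊕ B of three copies of Fin r (top, middle, bottom); let d₁′ be the smallest equivalence relation on X whose restriction to T ⊕ M contains d₁, let d₂′ be the smallest equivalence relation on X whose restriction to M ⊕ B contains d₂, and let J be the join (smallest common refinement upper bound) of d₁′ and d₂′ in the lattice of equivalence relations on X. Define the composite d₁ ∘ d₂ to be the restriction of J to T ⊕ B. Then the number of equivalence classes of d₁ ∘ d₂ meeting both T and B is at most the minimum of: the number of classes of d₁ meeting both copies of Fin r, and the number of classes of d₂ meeting both copies of Fin r. (In the language of partition diagrams: concatenation of diagrams cannot increase the number of propagating blocks.) -/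

import Mathlib

/-!
Let `J` be the join on `X = T ⊕ M ⊕ B`. Every `J`-class meeting both `T` and `B` contains a
propagating block of `d₁`: otherwise the points of `T` in that class would form a union of
`d₁`-blocks contained in `T`, hence a set saturated for both extended relations and so for `J`,
although its class also meets `B`. Since `d₁` refines the restriction of `J`, a block of `d₁` lies
in only one `J`-class, so choosing such a block for each propagating class is injective
(`propCount_comap_le`). The argument for `d₂` is the same, with the points of `B` in the class.
-/


/-- The number of blocks (equivalence classes) of a set-partition of a disjoint union
`α ⊕ β` that are propagating, i.e. meet both `α` and `β`. -/
noncomputable def propCount {α β : Type*} (s : Setoid (α ⊕ β)) : ℕ :=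
  Nat.card {c : Quotient s // (∃ a : α, Quotient.mk s (Sum.inl a) = c) ∧
    (∃ b : β, Quotient.mk s (Sum.inr b) = c)}

/-- Embedding of `T ⊕ M` into `X = T ⊕ M ⊕ B` (three copies of `Fin r`). -/
def iTM (r : ℕ) : (Fin r ⊕ Fin r) → (Fin r ⊕ (Fin r ⊕ Fin r)) := Sum.map id Sum.inl

/-- Embedding of `M ⊕ B` into `X = T ⊕ M ⊕ B`. -/
def iMB (r : ℕ) : (Fin r ⊕ Fin r) → (Fin r ⊕ (Fin r ⊕ Fin r)) := Sum.inr

/-- Embedding of `T ⊕ B` into `X = T ⊕ M ⊕ B`. -/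
def iTB (r : ℕ) : (Fin r ⊕ Fin r) → (Fin r ⊕ (Fin r ⊕ Fin r)) := Sum.map id Sum.inr

/-- The smallest equivalence relation on `X` whose restriction along `f` contains `d`
(restriction along `f` is `Setoid.comap f`). -/
def extendAlong {Y X : Type*} (f : Y → X) (d : Setoid Y) : Setoid X :=
  sInf {s : Setoid X | d ≤ Setoid.comap f s}

/-- The composite `d₁ ∘ d₂` of two set-partitions of `Fin r ⊕ Fin r` (concatenation of
partition diagrams): extend `d₁` to `T ⊕ M`, extend `d₂` to `M ⊕ B`, take the join in
the lattice of equivalence relations on `X = T ⊕ M ⊕ B`, and restrict to `T ⊕ B`. -/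
def diagComp (r : ℕ) (d₁ d₂ : Setoid (Fin r ⊕ Fin r)) : Setoid (Fin r ⊕ Fin r) :=
  Setoid.comap (iTB r) (extendAlong (iTM r) d₁ ⊔ extendAlong (iMB r) d₂)

/-- If every class of `J` joining the two sides of `α ⊕ β` contains a propagating block of `d`, then
the restriction of `J` to `α ⊕ β` has at most as many propagating blocks as `d`. -/
theorem propCount_comap_le {α β γ δ X : Type*} [Finite γ] [Finite δ] (J : Setoid X)
    (i : α ⊕ β → X) (e : γ ⊕ δ → X) (d : Setoid (γ ⊕ δ)) (hd : d ≤ Setoid.comap e J)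
    (h : ∀ a b, J (i (Sum.inl a)) (i (Sum.inr b)) →
      ∃ c c', d (Sum.inl c) (Sum.inr c') ∧ J (i (Sum.inl a)) (e (Sum.inl c))) :
    propCount (Setoid.comap i J) ≤ propCount d := by
  have key : ∀ C : {c : Quotient (Setoid.comap i J) //
      (∃ a : α, Quotient.mk _ (Sum.inl a) = c) ∧ (∃ b : β, Quotient.mk _ (Sum.inr b) = c)},
      ∃ a c c', Quotient.mk (Setoid.comap i J) (Sum.inl a) = C.1 ∧
        d (Sum.inl c) (Sum.inr c') ∧ J (i (Sum.inl a)) (e (Sum.inl c)) := by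
    rintro ⟨C, ⟨a, ha⟩, ⟨b, hb⟩⟩
    obtain ⟨c, c', h1, h2⟩ := h a b
      (Quotient.exact (s := Setoid.comap i J) (ha.trans hb.symm))
    exact ⟨a, c, c', ha, h1, h2⟩
  choose a c c' h1 h2 h3 using key
  refine Nat.card_le_card_of_injective
    (fun C => ⟨Quotient.mk d (Sum.inl (c C)), ⟨c C, rfl⟩,
      ⟨c' C, Quotient.sound (d.symm (h2 C))⟩⟩) ?_
  intro C D hCD
  have hcd : d (Sum.inl (c C)) (Sum.inl (c D)) := Quotient.exact (congrArg Subtype.val hCD)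
  refine Subtype.ext ?_
  rw [← h1 C, ← h1 D]
  exact Quotient.sound (J.trans (h3 C) (J.trans (hd hcd) (J.symm (h3 D))))

theorem le_comap_extendAlong {Y X : Type*} (f : Y → X) (d : Setoid Y) :
    d ≤ Setoid.comap f (extendAlong f d) := by
  intro x y hxy s hs
  exact hs hxy

/-- A set `p` whose preimages along `f` and `g` are saturated for `d₁` and `d₂` is saturated for the
join of the two extended relations. -/
theorem saturated_of_join {Y Z X : Type*} (f : Y → X) (g : Z → X) (d₁ : Setoid Y) (d₂ : Setoid Z)
    (p : X → Prop) (h₁ : ∀ x y, d₁ x y → p (f x) → p (f y))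
    (h₂ : ∀ x y, d₂ x y → p (g x) → p (g y)) {x y : X}
    (hxy : (extendAlong f d₁ ⊔ extendAlong g d₂) x y) (hx : p x) : p y := by
  have hle : extendAlong f d₁ ⊔ extendAlong g d₂ ≤ Setoid.ker p := by
    refine sup_le (sInf_le ?_) (sInf_le ?_)
    · intro u v huv
      exact propext ⟨h₁ u v huv, h₁ v u (d₁.symm huv)⟩
    · intro u v huv
      exact propext ⟨h₂ u v huv, h₂ v u (d₂.symm huv)⟩
  have he : p x = p y := hle hxy
  exact he ▸ hx

/-- concatenation of partition diagrams cannot increase the number of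
propagating blocks. -/
theorem statement14 (r : ℕ) (hr : 0 < r) (d₁ d₂ : Setoid (Fin r ⊕ Fin r)) :
    propCount (diagComp r d₁ d₂) ≤ min (propCount d₁) (propCount d₂) := by
  set J := extendAlong (iTM r) d₁ ⊔ extendAlong (iMB r) d₂ with hJ
  have hJ₁ : d₁ ≤ Setoid.comap (iTM r) J := fun {x y} hxy =>
    (le_sup_left : extendAlong (iTM r) d₁ ≤ J) (le_comap_extendAlong (iTM r) d₁ hxy)
  have hJ₂ : d₂ ≤ Setoid.comap (iMB r) J := fun {x y} hxy =>
    (le_sup_right : extendAlong (iMB r) d₂ ≤ J) (le_comap_extendAlong (iMB r) d₂ hxy)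
  refine le_min (propCount_comap_le J (iTB r) (iTM r) d₁ hJ₁ ?_)
    (propCount_comap_le J (iTB r) (iMB r) d₂ hJ₂ ?_)
  · intro a b hab
    by_contra! hno
    -- The points of `T` in the class of `a`.
    have hb := saturated_of_join (iTM r) (iMB r) d₁ d₂
      (fun x => ∃ t, x = Sum.inl t ∧ J (Sum.inl a) x) ?_ ?_ hab ⟨a, rfl, J.refl _⟩
    · obtain ⟨t, ht, -⟩ := hb
      cases ht
    · rintro (t | m) (t' | m') hxy ⟨u, hu, hJu⟩
      · exact ⟨t', rfl, J.trans hJu (hJ₁ hxy)⟩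
      · exact absurd hJu (hno t m' hxy)
      · cases hu
      · cases hu
    · rintro x y - ⟨u, hu, -⟩
      cases hu
  · intro a b hab
    by_contra! hno
    -- The points of `B` in the class of `a`.
    have ha := saturated_of_join (iTM r) (iMB r) d₁ d₂
      (fun x => ∃ t, x = Sum.inr (Sum.inr t) ∧ J (Sum.inl a) x) ?_ ?_ (J.symm hab)
      ⟨b, rfl, hab⟩
    · obtain ⟨t, ht, -⟩ := ha
      cases ht
    · rintro (t | m) y - ⟨u, hu, -⟩ <;> cases hu
    · rintro (m | t) (m' | t') hxy ⟨u, hu, hJu⟩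
      · cases hu
      · cases hu
      · exact absurd (J.trans hJu (hJ₂ hxy)) (hno m' t (d₂.symm hxy))
      · exact ⟨t', rfl, J.trans hJu (hJ₂ hxy)⟩
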